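/- arXiv:2310.16019 — 3 statements merged into one kernel-verified Lean document; each statement's English description precedes it below -/
import Mathlib

section
/- For every x ∈ M = {(p, q) : ℚ × ℤ | 0 ≤ p ∧ (p = 0 → 0 ≤ q)} and every natural number n ≥ 1, there exist u ∈ M and a natural number r < n such that x = n • u + (0, r), where n • u is the n-fold sum of u and (0, r) ∈ M. (The structure M satisfies the Presburger divisibility axiom schema.) -/
/-- The set `M = {(p, q) : ℚ × ℤ | 0 ≤ p ∧ (p = 0 → 0 ≤ q)}`. -/
def M : Set (ℚ × ℤ) := {x | 0 ≤ x.1 ∧ (x.1 = 0 → 0 ≤ x.2)}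

/-- `M` satisfies the Presburger divisibility axiom schema: every `x ∈ M` can be
written as `n • u + (0, r)` with `u ∈ M` and `r < n`, for every `n ≥ 1`. -/
theorem M_division (x : ℚ × ℤ) (hx : x ∈ M) (n : ℕ) (hn : 1 ≤ n) :
    ∃ u ∈ M, ∃ r : ℕ, r < n ∧ x = n • u + ((0 : ℚ), (r : ℤ)) := by
  obtain ⟨p, q⟩ := x
  obtain ⟨hp, hq⟩ := hx
  have hnQ : (0 : ℚ) < n := by exact_mod_cast hn
  have hnZ : (0 : ℤ) < n := by exact_mod_cast hn
  -- Divide exactly in `ℚ`, and with Euclidean remainder (nonnegative even for `q < 0`) in `ℤ`.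
  have hr : 0 ≤ q % n := Int.emod_nonneg q hnZ.ne'
  refine ⟨(p / n, q / n), ⟨div_nonneg hp hnQ.le, fun h => ?_⟩, (q % n).toNat, ?_, ?_⟩
  · have hp0 : p = 0 := (div_eq_zero_iff.mp h).resolve_right hnQ.ne'
    exact Int.ediv_nonneg (hq hp0) hnZ.le
  · have := Int.emod_lt_of_pos q hnZ
    omega
  · ext
    · simp [mul_div_cancel₀ p hnQ.ne']
    · simp [Int.toNat_of_nonneg hr, Int.mul_ediv_add_emod]
end

section
/- The function V_M on M satisfies the inductive axioms for V₂: (i) V_M(x) = (0,0) if and only if x = (0,0); (ii) if there is no t ∈ M with t + t = x, then V_M(x) = (0,1); (iii) for all x, t ∈ M, if x = t + t and x ≠ (0,0), then V_M(x) = V_M(t) + V_M(t). -/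
/-!
Since `V₂ 0 = 0` and `V₂` is `1` at odd numbers, the four-case definition of `V_M` collapses to two
cases (`VM_mk`): `V_M (p, 0) = (p, 0)`, and `V_M (p, q) = (0, V₂ |q|)` for `q ≠ 0`.
The axioms then follow from `V₂ n = 0 ↔ n = 0`, `V₂ n = 1` for odd `n` and `V₂ (n + n) = 2 V₂ n`,
because an element `(p, q)` of `M` is a double in `M` as soon as `q` is even, `ℚ` being divisible.
-/

/-- `V₂ x` is the largest power of 2 dividing `x`, with `V₂ 0 = 0`. -/
def V2 (x : ℕ) : ℕ := if x = 0 then 0 else 2 ^ padicValNat 2 x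

/-- The function `V_M` on (ambient) `ℚ × ℤ`, matching on `M` the definition:
`V_M (0, n) = (0, V₂ n)`; `V_M (p, q) = (0, 1)` if `p ≠ 0` and `q` odd;
`V_M (p, q) = (0, V₂ |q|)` if `p ≠ 0`, `q` even, `q ≠ 0`; `V_M (p, 0) = (p, 0)`
for `p ≠ 0`. -/
noncomputable def VM (x : ℚ × ℤ) : ℚ × ℤ :=
  if x.1 = 0 then ((0 : ℚ), (V2 x.2.natAbs : ℤ))
  else if x.2 = 0 then (x.1, 0)
  else if Odd x.2 then ((0 : ℚ), (1 : ℤ))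
  else ((0 : ℚ), (V2 x.2.natAbs : ℤ))

lemma V2_eq_zero_iff (n : ℕ) : V2 n = 0 ↔ n = 0 := by
  unfold V2
  split_ifs with h <;> simp [h]

lemma V2_of_odd {n : ℕ} (h : Odd n) : V2 n = 1 := by
  have hn : n ≠ 0 := by rintro rfl; simp at h
  have h2 : ¬ 2 ∣ n := h.not_two_dvd_nat
  simp [V2, hn, padicValNat.eq_zero_of_not_dvd h2]

lemma V2_add_self (n : ℕ) : V2 (n + n) = V2 n + V2 n := by
  by_cases hn : n = 0
  · simp [hn, V2]
  · have h2 : padicValNat 2 (2 * n) = 1 + padicValNat 2 n := by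
      rw [padicValNat.mul two_ne_zero hn, padicValNat_self]
    rw [← two_mul, ← two_mul]
    simp [V2, hn, h2, pow_add]

/-- The two-case form of `V_M`. -/
lemma VM_mk (p : ℚ) (q : ℤ) :
    VM (p, q) = if q = 0 then (p, 0) else (0, (V2 q.natAbs : ℤ)) := by
  by_cases hq : q = 0
  · by_cases hp : p = 0 <;> simp [VM, hp, hq, V2]
  · by_cases ho : Odd q
    · simp [VM, hq, V2_of_odd (Int.natAbs_odd.mpr ho)]
    · simp [VM, hq, ho]

/-- `V_M` satisfies the inductive axioms for `V₂` on `M`: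
(i) `V_M x = (0,0)` iff `x = (0,0)`;
(ii) if no `t ∈ M` has `t + t = x`, then `V_M x = (0,1)`;
(iii) if `x = t + t` with `t ∈ M` and `x ≠ (0,0)`, then `V_M x = V_M t + V_M t`. -/
theorem VM_inductive_axioms :
    (∀ x ∈ M, (VM x = ((0 : ℚ), (0 : ℤ)) ↔ x = ((0 : ℚ), (0 : ℤ)))) ∧
    (∀ x ∈ M, (¬∃ t ∈ M, t + t = x) → VM x = ((0 : ℚ), (1 : ℤ))) ∧
    (∀ x ∈ M, ∀ t ∈ M, x = t + t → x ≠ ((0 : ℚ), (0 : ℤ)) →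
      VM x = VM t + VM t) := by
  refine ⟨?_, ?_, ?_⟩
  · rintro ⟨p, q⟩ -
    by_cases hq : q = 0 <;> simp [VM_mk, hq, V2_eq_zero_iff]
  · rintro ⟨p, q⟩ ⟨hp, hpq⟩ h
    have ho : Odd q := by
      by_contra he
      obtain ⟨r, rfl⟩ := Int.not_odd_iff_even.mp he
      refine h ⟨(p / 2, r), ⟨div_nonneg hp zero_le_two, fun h0 => ?_⟩, by simp⟩
      have := hpq (by simpa using h0)
      dsimp only at this ⊢
      lia
    have hq : q ≠ 0 := by rintro rfl; simp at ho
    simp [VM_mk, hq, V2_of_odd (Int.natAbs_odd.mpr ho)]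
  · rintro _ - ⟨p, q⟩ - rfl -
    by_cases hq : q = 0
    · simp [VM_mk, hq]
    · have hqq : q + q ≠ 0 := by lia
      have habs : (q + q).natAbs = q.natAbs + q.natAbs := by lia
      rw [Prod.mk_add_mk, VM_mk, VM_mk, if_neg hq, if_neg hqq, habs, V2_add_self]
      simp
end

section
/- The sentence "for all x, if V(x) = x then for all y with x < y < x + x one has V(y) < y", which is true in (ℕ, +, V₂), fails in the structure (M, +, V_M): there exist x, y ∈ M with V_M(x) = x, x < y, y < x + x, and V_M(y) = y (for instance x = (1, 0) and y = (3/2, 0)). Here u < v means that there exists nonzero z ∈ M with u + z = v. Consequently, the Presburger axioms together with the inductive definition of V₂ do not axiomatize Büchi arithmetic BA₂. -/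
/-- The sentence "for all `x`, if `V x = x` then every `y` with `x < y < x + x` has
`V y < y`" is true in `(ℕ, +, V₂)` but fails in `(M, +, V_M)`, where `u < v` means
`∃ z ∈ M, z ≠ (0,0) ∧ u + z = v`. -/
theorem sentence_true_in_N_fails_in_M :
    (∀ x y : ℕ, V2 x = x → x < y → y < x + x → V2 y < y) ∧
    (∃ x ∈ M, ∃ y ∈ M,
      VM x = x ∧
      (∃ z ∈ M, z ≠ ((0 : ℚ), (0 : ℤ)) ∧ x + z = y) ∧
      (∃ z ∈ M, z ≠ ((0 : ℚ), (0 : ℤ)) ∧ y + z = x + x) ∧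
      VM y = y) := by
  constructor
  · intro x y hx hxy hyx
    have hx0 : x ≠ 0 := by omega
    have hy0 : y ≠ 0 := by omega
    simp only [V2, hx0, hy0, if_false] at hx ⊢
    refine lt_of_le_of_ne (Nat.le_of_dvd (by omega) pow_padicValNat_dvd) fun hy => ?_
    -- Both `x = 2 ^ a` and `y = 2 ^ b` are powers of 2, so `2 ^ a < 2 ^ b < 2 ^ (a + 1)`.
    rw [← hx, ← hy] at hxy
    rw [← hx, ← hy, ← two_mul, ← pow_succ'] at hyx
    have h1 := (Nat.pow_lt_pow_iff_right (by norm_num)).1 hxy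
    have h2 := (Nat.pow_lt_pow_iff_right (by norm_num)).1 hyx
    omega
  · -- `V_M` fixes every `(p, 0)`; the differences `y - x` and `2x - y` are both `(1/2, 0)`.
    refine ⟨(1, 0), ?_, (3 / 2, 0), ?_, ?_, ⟨(1 / 2, 0), ?_, ?_, ?_⟩,
      ⟨(1 / 2, 0), ?_, ?_, ?_⟩, ?_⟩ <;> norm_num [M, VM]
end
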